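/- For every integer n ≥ 2 there exists a bicolored point set S of n points in the plane in general position, containing at least one red and at least one blue point, such that some minimum bichromatic spanning tree of S has exactly ⌊n²/4⌋ − n + 1 crossings, where a crossing is an unordered pair of distinct edges of the tree that cross each other. -/

import Mathlib

open scoped Classical

noncomputable section

/-- Points in the Euclidean plane. -/
abbrev Pt : Type := EuclideanSpace ℝ (Fin 2)

/-- `S` is in general position: no three (distinct) points of `S` are collinear. -/
def GenPos (S : Finset Pt) : Prop :=
  ∀ p ∈ S, ∀ q ∈ S, ∀ r ∈ S, p ≠ q → p ≠ r → q ≠ r →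
    ¬ Collinear ℝ ({p, q, r} : Set Pt)

/-- The closed segments `[a,b]` and `[c,d]` cross: they share a point that is
interior to both segments. -/
def SegCross (a b c d : Pt) : Prop :=
  ∃ p : Pt, p ∈ openSegment ℝ a b ∧ p ∈ openSegment ℝ c d

/-- Two unordered edges (over vertices lying in the plane) cross. -/
def EdgeCross {S : Finset Pt} (e₁ e₂ : Sym2 ↥S) : Prop :=
  ∃ a b c d : ↥S, e₁ = s(a, b) ∧ e₂ = s(c, d) ∧ SegCross ↑a ↑b ↑c ↑d

/-- A (straight-line drawn) graph is plane if no two of its edges cross. -/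
def PlaneGraph {S : Finset Pt} (G : SimpleGraph ↥S) : Prop :=
  ∀ e₁ ∈ G.edgeSet, ∀ e₂ ∈ G.edgeSet, e₁ ≠ e₂ → ¬ EdgeCross e₁ e₂

/-- Every edge has one red (`true`) and one blue (`false`) endpoint. -/
def Bichromatic {S : Finset Pt} (col : Pt → Bool) (G : SimpleGraph ↥S) : Prop :=
  ∀ u v : ↥S, G.Adj u v → col ↑u ≠ col ↑v

/-- The Euclidean length of an unordered edge. -/
def edgeLen {S : Finset Pt} : Sym2 ↥S → ℝ :=
  Sym2.lift ⟨fun a b => dist (a : Pt) (b : Pt), fun _ _ => dist_comm _ _⟩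

/-- The total Euclidean length of the edges of a graph drawn with straight-line edges. -/
def graphLen {S : Finset Pt} (G : SimpleGraph ↥S) : ℝ :=
  ∑ᶠ e ∈ G.edgeSet, edgeLen e

/-- A bichromatic spanning tree of `S`. -/
def IsBST {S : Finset Pt} (col : Pt → Bool) (G : SimpleGraph ↥S) : Prop :=
  G.IsTree ∧ Bichromatic col G

/-- A minimum bichromatic spanning tree of `S`. -/
def IsMinBST {S : Finset Pt} (col : Pt → Bool) (G : SimpleGraph ↥S) : Prop :=
  IsBST col G ∧ ∀ G' : SimpleGraph ↥S, IsBST col G' → graphLen G ≤ graphLen G'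

/-- The set of crossings of a graph: unordered pairs of distinct edges that cross. -/
def Crossings {S : Finset Pt} (G : SimpleGraph ↥S) : Set (Sym2 (Sym2 ↥S)) :=
  {p | ∃ e₁ e₂ : Sym2 ↥S, p = s(e₁, e₂) ∧ e₁ ∈ G.edgeSet ∧ e₂ ∈ G.edgeSet ∧
    e₁ ≠ e₂ ∧ EdgeCross e₁ e₂}

/-- The point of the parabola `y = x²` with abscissa `x`. -/
def parabolaPt (x : ℝ) : Pt := !₂[x, x ^ 2]

@[simp] lemma parabolaPt_zero (x : ℝ) : parabolaPt x 0 = x := rfl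

@[simp] lemma parabolaPt_one (x : ℝ) : parabolaPt x 1 = x ^ 2 := rfl

lemma parabolaPt_injective : Function.Injective parabolaPt := fun x y h => by
  simpa using congrArg (fun p : Pt => p 0) h

lemma dist_parabolaPt (x y : ℝ) :
    dist (parabolaPt x) (parabolaPt y) = √((x - y) ^ 2 + (x ^ 2 - y ^ 2) ^ 2) := by
  simp [EuclideanSpace.dist_eq, Fin.sum_univ_two, Real.dist_eq, sq_abs]

lemma not_collinear_parabolaPt {x y z : ℝ} (hxy : x ≠ y) (hxz : x ≠ z) (hyz : y ≠ z) :
    ¬ Collinear ℝ ({parabolaPt x, parabolaPt y, parabolaPt z} : Set Pt) := by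
  intro h
  obtain ⟨v, hv⟩ := (collinear_iff_of_mem (p₀ := parabolaPt x) (by simp)).1 h
  obtain ⟨s, hs⟩ := hv (parabolaPt y) (by simp)
  obtain ⟨t, ht⟩ := hv (parabolaPt z) (by simp)
  have hs0 := congrArg (fun p : Pt => p 0) hs
  have hs1 := congrArg (fun p : Pt => p 1) hs
  have ht0 := congrArg (fun p : Pt => p 0) ht
  have ht1 := congrArg (fun p : Pt => p 1) ht
  simp at hs0 hs1 ht0 ht1
  have key : (y - x) * (z - x) * (z - y) = 0 := by
    have e1 : y - x = s * v 0 := by linarith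
    have e2 : z - x = t * v 0 := by linarith
    have e3 : y ^ 2 - x ^ 2 = s * v 1 := by linarith
    have e4 : z ^ 2 - x ^ 2 = t * v 1 := by linarith
    have e5 : (y - x) * (z ^ 2 - x ^ 2) = (z - x) * (y ^ 2 - x ^ 2) := by
      rw [e1, e2, e3, e4]; ring
    linear_combination e5
  simp [sub_eq_zero, hxy.symm, hxz.symm, hyz.symm] at key

lemma segCross_parabolaPt {a b c d : ℝ} (hab : a < b) (hbc : b < c) (hcd : c < d) :
    SegCross (parabolaPt a) (parabolaPt c) (parabolaPt b) (parabolaPt d) := by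
  have hD : 0 < b + d - a - c := by linarith
  have hca : 0 < c - a := by linarith
  have hdb : 0 < d - b := by linarith
  set x : ℝ := (b * d - a * c) / (b + d - a - c) with hx
  have hxb : x - b = (b - a) * (c - b) / (b + d - a - c) := by
    rw [hx]; field_simp; ring
  have hcx : c - x = (c - b) * (d - c) / (b + d - a - c) := by
    rw [hx]; field_simp; ring
  have hxe : x * (b + d - a - c) = b * d - a * c := by rw [hx]; field_simp
  have h1 : 0 < x - b := by
    rw [hxb]; exact div_pos (mul_pos (by linarith) (by linarith)) hD
  have h2 : 0 < c - x := by
    rw [hcx]; exact div_pos (mul_pos (by linarith) (by linarith)) hD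
  refine ⟨!₂[x, (a + c) * x - a * c], ?_, ?_⟩
  · refine ⟨(c - x) / (c - a), (x - a) / (c - a), div_pos h2 hca,
      div_pos (by linarith) hca, by field_simp; ring, ?_⟩
    ext i
    fin_cases i <;> simp [parabolaPt] <;> field_simp <;> ring
  · refine ⟨(d - x) / (d - b), (x - b) / (d - b), div_pos (by linarith) hdb,
      div_pos h1 hdb, by field_simp; ring, ?_⟩
    ext i
    fin_cases i
    · simp [parabolaPt]; field_simp; ring
    · simp [parabolaPt]; field_simp; linear_combination (d - b) * hxe

lemma SegCross.swap_left {a b c d : Pt} (h : SegCross a b c d) : SegCross b a c d := by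
  obtain ⟨p, h1, h2⟩ := h
  exact ⟨p, by rwa [openSegment_symm], h2⟩

lemma SegCross.swap_right {a b c d : Pt} (h : SegCross a b c d) : SegCross a b d c := by
  obtain ⟨p, h1, h2⟩ := h
  exact ⟨p, h1, by rwa [openSegment_symm]⟩

lemma SegCross.symm {a b c d : Pt} (h : SegCross a b c d) : SegCross c d a b := by
  obtain ⟨p, h1, h2⟩ := h
  exact ⟨p, h2, h1⟩

lemma not_segCross_parabolaPt_of_common {x y z : ℝ} (hxy : x ≠ y) (hyz : y ≠ z) :
    ¬ SegCross (parabolaPt x) (parabolaPt y) (parabolaPt x) (parabolaPt z) := by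
  rintro ⟨p, ⟨s', s, -, hs, hss, rfl⟩, ⟨t', t, -, -, htt, h⟩⟩
  obtain rfl : s' = 1 - s := by linarith
  obtain rfl : t' = 1 - t := by linarith
  have h0 := congrArg (fun p : Pt => p 0) h
  have h1 := congrArg (fun p : Pt => p 1) h
  simp at h0 h1
  have key : s * (y - x) * (y - z) = 0 := by linear_combination (x + z) * h0 - h1
  simp [sub_eq_zero, hxy.symm, hyz, hs.ne'] at key

lemma edgeCross_mk {S : Finset Pt} {a b c d : ↥S} :
    EdgeCross s(a, b) s(c, d) ↔ SegCross (a : Pt) b c d := by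
  refine ⟨?_, fun h => ⟨a, b, c, d, rfl, rfl, h⟩⟩
  rintro ⟨a', b', c', d', h1, h2, h⟩
  rcases Sym2.eq_iff.1 h1 with ⟨rfl, rfl⟩ | ⟨rfl, rfl⟩ <;>
    rcases Sym2.eq_iff.1 h2 with ⟨rfl, rfl⟩ | ⟨rfl, rfl⟩
  exacts [h, h.swap_right, h.swap_left, h.swap_left.swap_right]

lemma sum_le_graphLen {S : Finset Pt} {G : SimpleGraph ↥S} (hG : G.Connected) (r : ↥S)
    (w : ↥S → ℝ) (hw : ∀ u v, G.Adj u v → u ≠ r → w u ≤ dist (u : Pt) v) :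
    ∑ v ∈ Finset.univ.erase r, w v ≤ graphLen G := by
  have hpar : ∀ v, v ≠ r → ∃ u, G.Adj v u ∧ G.dist u r < G.dist v r := by
    intro v hv
    obtain ⟨p, hp⟩ := hG.exists_walk_length_eq_dist v r
    cases p with
    | nil => exact absurd rfl hv
    | cons h q =>
      refine ⟨_, h, ?_⟩
      have := SimpleGraph.dist_le q
      rw [SimpleGraph.Walk.length_cons] at hp
      omega
  choose! par hadj hlt using hpar
  have hinj : Set.InjOn (fun v => s(v, par v)) (Finset.univ.erase r : Finset ↥S) := by
    intro v hv w hw h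
    simp only [Finset.coe_erase, Finset.coe_univ, Set.mem_sdiff, Set.mem_univ, true_and,
      Set.mem_singleton_iff] at hv hw
    rcases Sym2.eq_iff.1 h with ⟨h, -⟩ | ⟨h1, h2⟩
    · exact h
    · have h3 := hlt v hv
      have h4 := hlt w hw
      rw [h2] at h3
      rw [← h1] at h4
      omega
  calc ∑ v ∈ Finset.univ.erase r, w v
      ≤ ∑ v ∈ Finset.univ.erase r, edgeLen s(v, par v) :=
        Finset.sum_le_sum fun v hv =>
          hw _ _ (hadj v (Finset.ne_of_mem_erase hv)) (Finset.ne_of_mem_erase hv)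
    _ = ∑ e ∈ (Finset.univ.erase r).image (fun v => s(v, par v)), edgeLen e :=
        (Finset.sum_image hinj).symm
    _ ≤ ∑ e ∈ G.edgeFinset, edgeLen e := by
        refine Finset.sum_le_sum_of_subset_of_nonneg ?_ ?_
        · intro e he
          obtain ⟨v, hv, rfl⟩ := Finset.mem_image.1 he
          simpa using hadj v (Finset.ne_of_mem_erase hv)
        · rintro ⟨a, b⟩ - -
          exact dist_nonneg (x := (a : Pt)) (y := b)
    _ = graphLen G := by
        rw [graphLen, ← SimpleGraph.coe_edgeFinset, finsum_mem_coe_finset]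

/-- The graph joining every vertex other than the root `r` to its parent. -/
def parentGraph {V : Type*} (r : V) (par : V → V) : SimpleGraph V :=
  SimpleGraph.fromRel fun u v => u ≠ r ∧ v = par u

section ParentGraph

variable {V : Type*} {r : V} {par : V → V}

lemma parentGraph_adj_par (hne : ∀ v, v ≠ r → par v ≠ v) {v : V} (hv : v ≠ r) :
    (parentGraph r par).Adj v (par v) :=
  ⟨(hne v hv).symm, Or.inl ⟨hv, rfl⟩⟩

lemma mem_edgeSet_parentGraph (hne : ∀ v, v ≠ r → par v ≠ v) {e : Sym2 V} :
    e ∈ (parentGraph r par).edgeSet ↔ ∃ v, v ≠ r ∧ s(v, par v) = e := by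
  constructor
  · induction e with
    | _ a b =>
      rintro ⟨-, ⟨h, h'⟩ | ⟨h, h'⟩⟩
      exacts [⟨a, h, by rw [← h']⟩, ⟨b, h, by rw [← h', Sym2.eq_swap]⟩]
  · rintro ⟨v, hv, rfl⟩
    exact parentGraph_adj_par hne hv

variable (hne : ∀ v, v ≠ r → par v ≠ v) (hpp : ∀ v, v ≠ r → par v ≠ r → par (par v) = r)

include hpp in
lemma eq_of_parentEdge_eq {v w : V} (hv : v ≠ r) (hw : w ≠ r)
    (h : s(v, par v) = s(w, par w)) : v = w := by
  rcases Sym2.eq_iff.1 h with ⟨h, -⟩ | ⟨h1, h2⟩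
  · exact h
  · have := hpp w hw (h1 ▸ hv)
    rw [← h1, h2] at this
    exact absurd this hw

variable [Fintype V] [DecidableEq V]

include hne in
lemma edgeFinset_parentGraph :
    (parentGraph r par).edgeFinset = (Finset.univ.erase r).image fun v => s(v, par v) := by
  ext e
  simp [mem_edgeSet_parentGraph hne]

include hpp in
lemma injOn_parentEdge :
    Set.InjOn (fun v => s(v, par v)) (Finset.univ.erase r : Finset V) := by
  intro v hv w hw h
  exact eq_of_parentEdge_eq hpp (by simpa using hv) (by simpa using hw) h

omit [DecidableEq V] in
include hne hpp in
lemma isTree_parentGraph : (parentGraph r par).IsTree := by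
  rw [SimpleGraph.isTree_iff_connected_and_card]
  constructor
  · have key : ∀ v, (parentGraph r par).Reachable v r := by
      intro v
      by_cases hv : v = r
      · rw [hv]
      have h1 := (parentGraph_adj_par hne hv).reachable
      by_cases hv' : par v = r
      · rwa [hv'] at h1
      have h2 := (parentGraph_adj_par hne hv').reachable
      rw [hpp v hv hv'] at h2
      exact h1.trans h2
    exact { preconnected := fun u v => (key u).trans (key v).symm, nonempty := ⟨r⟩ }
  · rw [Nat.card_eq_fintype_card, ← SimpleGraph.edgeFinset_card, edgeFinset_parentGraph hne,
      Finset.card_image_of_injOn (injOn_parentEdge hpp), Finset.card_erase_of_mem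
      (Finset.mem_univ r), Finset.card_univ, Nat.card_eq_fintype_card]
    have : 0 < Fintype.card V := Fintype.card_pos_iff.2 ⟨r⟩
    omega

end ParentGraph

lemma graphLen_parentGraph {S : Finset Pt} {r : ↥S} {par : ↥S → ↥S}
    (hne : ∀ v, v ≠ r → par v ≠ v) (hpp : ∀ v, v ≠ r → par v ≠ r → par (par v) = r) :
    graphLen (parentGraph r par) = ∑ v ∈ Finset.univ.erase r, dist (v : Pt) (par v) := by
  rw [graphLen, ← SimpleGraph.coe_edgeFinset, finsum_mem_coe_finset,
    edgeFinset_parentGraph hne, Finset.sum_image (injOn_parentEdge hpp)]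
  rfl

/-- If each non-root vertex is joined to a nearest vertex of the opposite colour, the parent
graph is a minimum bichromatic spanning tree. -/
lemma isMinBST_parentGraph {S : Finset Pt} {col : Pt → Bool} {r : ↥S} {par : ↥S → ↥S}
    (hcol : ∀ v, col (par v) ≠ col v)
    (hpp : ∀ v, v ≠ r → par v ≠ r → par (par v) = r)
    (hmin : ∀ u v : ↥S, u ≠ r → col u ≠ col v → dist (u : Pt) (par u) ≤ dist (u : Pt) v) :
    IsMinBST col (parentGraph r par) := by
  have hne : ∀ v, v ≠ r → par v ≠ v := fun v _ h => hcol v (by rw [h])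
  refine ⟨⟨isTree_parentGraph hne hpp, ?_⟩, ?_⟩
  · rintro u v ⟨-, ⟨-, rfl⟩ | ⟨-, rfl⟩⟩
    exacts [(hcol u).symm, hcol v]
  · rintro G ⟨hG, hGcol⟩
    rw [graphLen_parentGraph hne hpp]
    exact sum_le_graphLen hG.connected r _ fun u v huv hu => hmin u v hu (hGcol u v huv)

/-- Abscissae of the construction: `±1/10`, the negatives of `P`, and `Q`. -/
def doubleStarAbscissae (P Q : Finset ℝ) : Finset ℝ :=
  insert (-(1 / 10)) (insert (1 / 10) (P.image Neg.neg ∪ Q))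

lemma mem_doubleStarAbscissae {P Q : Finset ℝ} {x : ℝ} :
    x ∈ doubleStarAbscissae P Q ↔ x = -(1 / 10) ∨ x = 1 / 10 ∨ -x ∈ P ∨ x ∈ Q := by
  have : (∃ a ∈ P, -a = x) ↔ -x ∈ P :=
    ⟨by rintro ⟨a, ha, rfl⟩; simpa using ha, fun h => ⟨-x, h, by simp⟩⟩
  simp only [doubleStarAbscissae, Finset.mem_insert, Finset.mem_union, Finset.mem_image, this]

lemma card_doubleStarAbscissae {P Q : Finset ℝ} (hP : ∀ x ∈ P, 1 / 2 ≤ x ∧ x ≤ 3 / 5)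
    (hQ : ∀ x ∈ Q, 1 / 2 ≤ x ∧ x ≤ 3 / 5) :
    (doubleStarAbscissae P Q).card = P.card + Q.card + 2 := by
  have h1 : (1 / 10 : ℝ) ∉ P.image Neg.neg ∪ Q := by
    simp only [Finset.mem_union, Finset.mem_image, not_or, not_exists, not_and]
    exact ⟨fun x hx h => by linarith [hP x hx], fun h => by linarith [hQ _ h]⟩
  have h2 : (-(1 / 10) : ℝ) ∉ insert (1 / 10 : ℝ) (P.image Neg.neg ∪ Q) := by
    simp only [Finset.mem_insert, Finset.mem_union, Finset.mem_image, not_or, not_exists, not_and]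
    exact ⟨by norm_num, fun x hx h => by linarith [hP x hx], fun h => by linarith [hQ _ h]⟩
  have h3 : Disjoint (P.image Neg.neg) Q := by
    rw [Finset.disjoint_left]
    intro x hx hx'
    obtain ⟨y, hy, rfl⟩ := Finset.mem_image.1 hx
    linarith [hP y hy, hQ _ hx']
  rw [doubleStarAbscissae, Finset.card_insert_of_notMem h2, Finset.card_insert_of_notMem h1,
    Finset.card_union_of_disjoint h3, Finset.card_image_of_injective _ neg_injective]

/-- On the parabola, a double star centred at abscissae `±1/10` whose leaves lie over
`[-3/5, -1/2]` and `[1/2, 3/5]` is a minimum bichromatic spanning tree, in which each edge at one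
centre crosses each edge at the other centre, the central edge excepted. -/
lemma exists_minBST_card_crossings {P Q : Finset ℝ} (hP : ∀ x ∈ P, 1 / 2 ≤ x ∧ x ≤ 3 / 5)
    (hQ : ∀ x ∈ Q, 1 / 2 ≤ x ∧ x ≤ 3 / 5) :
    ∃ (S : Finset Pt) (col : Pt → Bool) (T : SimpleGraph ↥S),
      S.card = P.card + Q.card + 2 ∧ GenPos S ∧
      (∃ r ∈ S, col r = true) ∧ (∃ b ∈ S, col b = false) ∧
      IsMinBST col T ∧ Nat.card (Crossings T) = P.card * Q.card := by
  set X := doubleStarAbscissae P Q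
  set S : Finset Pt := X.image parabolaPt with hS
  set col : Pt → Bool := fun p => decide (p 0 < 0) with hcol
  have hmem : ∀ {x}, x ∈ X → parabolaPt x ∈ S := fun h => Finset.mem_image_of_mem _ h
  have hr : -(1 / 10) ∈ X := mem_doubleStarAbscissae.2 (by simp)
  have hb : 1 / 10 ∈ X := mem_doubleStarAbscissae.2 (by simp)
  have hPX : ∀ x ∈ P, -x ∈ X := fun x hx => mem_doubleStarAbscissae.2 (by simp [hx])
  have hQX : ∀ x ∈ Q, x ∈ X := fun x hx => mem_doubleStarAbscissae.2 (by simp [hx])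
  set pt : ↥X → ↥S := fun x => ⟨parabolaPt x, hmem x.2⟩ with hpt
  have hptinj : Function.Injective pt := fun x y h =>
    Subtype.ext (parabolaPt_injective (congrArg Subtype.val h))
  have hptsurj : Function.Surjective pt := by
    rintro ⟨p, hp⟩
    obtain ⟨x, hx, rfl⟩ := Finset.mem_image.1 hp
    exact ⟨⟨x, hx⟩, rfl⟩
  set r : ↥S := pt ⟨_, hr⟩ with hrdef
  set b : ↥S := pt ⟨_, hb⟩ with hbdef
  set par : ↥S → ↥S := fun v => if (v : Pt) 0 < 0 then b else r with hpar
  have hparneg : ∀ {v : ↥S}, (v : Pt) 0 < 0 → par v = b := fun h => if_pos h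
  have hparpos : ∀ {v : ↥S}, ¬ (v : Pt) 0 < 0 → par v = r := fun h => if_neg h
  have hr0 : (r : Pt) 0 = -(1 / 10) := rfl
  have hb0 : (b : Pt) 0 = 1 / 10 := rfl
  have hcolpar : ∀ v, col (par v) ≠ col v := by
    intro v
    by_cases h : (v : Pt) 0 < 0
    · rw [hparneg h]; simp [hcol, h, hb0]
    · rw [hparpos h]; simp [hcol, h, hr0]
  have hne : ∀ v, v ≠ r → par v ≠ v := fun v _ h => hcolpar v (by rw [h])
  have hpp : ∀ v, v ≠ r → par v ≠ r → par (par v) = r := by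
    intro v _ hv
    by_cases h : (v : Pt) 0 < 0
    · rw [hparneg h]; exact hparpos (by rw [hb0]; norm_num)
    · exact absurd (hparpos h) hv
  have hcases : ∀ v : ↥S, v = r ∨ v = b ∨ (∃ (p : ℝ) (hp : p ∈ P), v = pt ⟨-p, hPX p hp⟩) ∨
      ∃ (q : ℝ) (hq : q ∈ Q), v = pt ⟨q, hQX q hq⟩ := by
    intro v
    obtain ⟨⟨x, hx⟩, rfl⟩ := hptsurj v
    rcases mem_doubleStarAbscissae.1 hx with rfl | rfl | h | h
    · exact Or.inl rfl
    · exact Or.inr (Or.inl rfl)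
    · exact Or.inr (Or.inr (Or.inl ⟨-x, h, by simp⟩))
    · exact Or.inr (Or.inr (Or.inr ⟨x, h, rfl⟩))
  have hcolpos : ∀ {u v : ↥S}, 0 < (u : Pt) 0 → 0 < (v : Pt) 0 → col u = col v :=
    fun hu hv => by simp [hcol, hu.not_gt, hv.not_gt]
  have hcolneg : ∀ {u v : ↥S}, (u : Pt) 0 < 0 → (v : Pt) 0 < 0 → col u = col v :=
    fun hu hv => by simp [hcol, hu, hv]
  have hnegP : ∀ (p : ℝ) (hp : p ∈ P), (pt ⟨-p, hPX p hp⟩ : Pt) 0 < 0 := fun p hp => by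
    simp [hpt]; linarith [hP p hp]
  have hposQ : ∀ (q : ℝ) (hq : q ∈ Q), 0 < (pt ⟨q, hQX q hq⟩ : Pt) 0 := fun q hq => by
    simp [hpt]; linarith [hQ q hq]
  have hrneg : (r : Pt) 0 < 0 := by rw [hr0]; norm_num
  have hbpos : 0 < (b : Pt) 0 := by rw [hb0]; norm_num
  have hmin : ∀ u v : ↥S, u ≠ r → col u ≠ col v →
      dist (u : Pt) (par u) ≤ dist (u : Pt) v := by
    intro u v hu huv
    rcases hcases u with rfl | rfl | ⟨p, hp, rfl⟩ | ⟨q, hq, rfl⟩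
    · exact absurd rfl hu
    · rw [hparpos hbpos.not_gt]
      rcases hcases v with rfl | rfl | ⟨p, hp, rfl⟩ | ⟨q, hq, rfl⟩
      · exact le_rfl
      · exact absurd rfl huv
      · have := hP p hp
        simp only [hbdef, hrdef, hpt, dist_parabolaPt]
        exact Real.sqrt_le_sqrt (by nlinarith)
      · exact absurd (hcolpos hbpos (hposQ q hq)) huv
    · have hpI := hP p hp
      rw [hparneg (hnegP p hp)]
      rcases hcases v with rfl | rfl | ⟨p', hp', rfl⟩ | ⟨q, hq, rfl⟩
      · exact absurd (hcolneg (hnegP p hp) hrneg) huv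
      · exact le_rfl
      · exact absurd (hcolneg (hnegP p hp) (hnegP p' hp')) huv
      · have := hQ q hq
        simp only [hbdef, hpt, dist_parabolaPt]
        refine Real.sqrt_le_sqrt ?_
        have h1 : 1 ≤ (-p - q) ^ 2 := by nlinarith
        have h2 : (-p - 1 / 10) ^ 2 ≤ 49 / 100 := by nlinarith
        have h3 : ((-p) ^ 2 - (1 / 10) ^ 2) ^ 2 ≤ 1 / 4 := by
          rw [show (1 / 4 : ℝ) = (1 / 2) ^ 2 by norm_num]
          exact sq_le_sq' (by nlinarith) (by nlinarith)
        nlinarith [sq_nonneg ((-p) ^ 2 - q ^ 2)]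
    · have hqI := hQ q hq
      rw [hparpos (hposQ q hq).not_gt]
      rcases hcases v with rfl | rfl | ⟨p, hp, rfl⟩ | ⟨q', hq', rfl⟩
      · exact le_rfl
      · exact absurd (hcolpos (hposQ q hq) hbpos) huv
      · have := hP p hp
        simp only [hrdef, hpt, dist_parabolaPt]
        refine Real.sqrt_le_sqrt ?_
        have h1 : 1 ≤ (q - -p) ^ 2 := by nlinarith
        have h2 : (q - -(1 / 10)) ^ 2 ≤ 49 / 100 := by nlinarith
        have h3 : (q ^ 2 - (-(1 / 10)) ^ 2) ^ 2 ≤ 1 / 4 := by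
          rw [show (1 / 4 : ℝ) = (1 / 2) ^ 2 by norm_num]
          exact sq_le_sq' (by nlinarith) (by nlinarith)
        nlinarith [sq_nonneg (q ^ 2 - (-p) ^ 2)]
      · exact absurd (hcolpos (hposQ q hq) (hposQ q' hq')) huv
  refine ⟨S, col, parentGraph r par, ?_, ?_, ⟨r, r.2, ?_⟩, ⟨b, b.2, ?_⟩,
    isMinBST_parentGraph hcolpar hpp hmin, ?_⟩
  · rw [hS, Finset.card_image_of_injective _ parabolaPt_injective, card_doubleStarAbscissae hP hQ]
  · intro p hp q hq s hs hpq hps hqs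
    obtain ⟨x, -, rfl⟩ := Finset.mem_image.1 hp
    obtain ⟨y, -, rfl⟩ := Finset.mem_image.1 hq
    obtain ⟨z, -, rfl⟩ := Finset.mem_image.1 hs
    exact not_collinear_parabolaPt (ne_of_apply_ne _ hpq) (ne_of_apply_ne _ hps)
      (ne_of_apply_ne _ hqs)
  · simp [hcol, hr0]
  · simp [hcol, hb0]
  set left : ↥P → ↥S := fun p => pt ⟨-p, hPX p p.2⟩ with hleft
  set right : ↥Q → ↥S := fun q => pt ⟨q, hQX q q.2⟩ with hright
  have hleftneg : ∀ p, (left p : Pt) 0 < 0 := fun p => hnegP p p.2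
  have hrightpos : ∀ q, 0 < (right q : Pt) 0 := fun q => hposQ q q.2
  have hleftr : ∀ p, left p ≠ r := fun p h => by
    have := congrArg (fun v : ↥S => (v : Pt) 0) h
    simp [hleft, hpt, hr0] at this
    linarith [hP p p.2]
  have hrightr : ∀ q, right q ≠ r := fun q h => by
    have := hrightpos q
    rw [h, hr0] at this
    linarith
  have hleftinj : Function.Injective left := fun p p' h =>
    Subtype.ext (neg_injective (congrArg Subtype.val (hptinj h)))
  have hrightinj : Function.Injective right := fun q q' h =>
    Subtype.ext (congrArg (fun x : ↥X => (x : ℝ)) (hptinj h))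
  set F : ↥P × ↥Q → Sym2 (Sym2 ↥S) := fun z =>
    s(s(left z.1, par (left z.1)), s(right z.2, par (right z.2))) with hF
  have hFinj : Function.Injective F := by
    rintro ⟨p, q⟩ ⟨p', q'⟩ h
    rcases Sym2.eq_iff.1 h with ⟨h1, h2⟩ | ⟨h1, -⟩
    · have e1 := hleftinj (eq_of_parentEdge_eq hpp (hleftr _) (hleftr _) h1)
      have e2 := hrightinj (eq_of_parentEdge_eq hpp (hrightr _) (hrightr _) h2)
      simp only at e1 e2
      rw [e1, e2]
    · have e1 := eq_of_parentEdge_eq hpp (hleftr _) (hrightr _) h1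
      have h3 := hleftneg p
      have h4 := hrightpos q'
      simp only at e1
      rw [e1] at h3
      exact absurd h3 h4.not_gt
  have hshare : ∀ u v w : ↥S, u ≠ v → v ≠ w → ¬ SegCross (u : Pt) v u w := by
    intro u v w huv hvw
    obtain ⟨x, rfl⟩ := hptsurj u
    obtain ⟨y, rfl⟩ := hptsurj v
    obtain ⟨z, rfl⟩ := hptsurj w
    refine not_segCross_parabolaPt_of_common ?_ ?_
    · exact fun h => huv (congrArg pt (Subtype.ext h))
    · exact fun h => hvw (congrArg pt (Subtype.ext h))
  have hmixed : ∀ v w : ↥S, v ≠ r → w ≠ r → (v : Pt) 0 < 0 → ¬ (w : Pt) 0 < 0 →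
      EdgeCross s(v, par v) s(w, par w) →
      ∃ z, F z = s(s(v, par v), s(w, par w)) := by
    intro v w hv hw hv0 hw0 hc
    have hwb : w ≠ b := by
      rintro rfl
      rw [hparneg hv0, hparpos hw0, edgeCross_mk] at hc
      exact hshare _ v r (fun h => hw0 (by rw [h]; exact hv0)) hv hc.swap_left
    obtain ⟨p, rfl⟩ : ∃ p, left p = v := by
      rcases hcases v with rfl | rfl | ⟨p, hp, rfl⟩ | ⟨q, hq, rfl⟩
      · exact absurd rfl hv
      · rw [hb0] at hv0; norm_num at hv0
      · exact ⟨⟨p, hp⟩, rfl⟩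
      · exact absurd hv0 (hrightpos ⟨q, hq⟩).not_gt
    obtain ⟨q, rfl⟩ : ∃ q, right q = w := by
      rcases hcases w with rfl | rfl | ⟨p, hp, rfl⟩ | ⟨q, hq, rfl⟩
      · exact absurd rfl hw
      · exact absurd rfl hwb
      · exact absurd (hleftneg ⟨p, hp⟩) hw0
      · exact ⟨⟨q, hq⟩, rfl⟩
    exact ⟨(p, q), rfl⟩
  have hcommon : ∀ v w : ↥S, v ≠ r → w ≠ r → v ≠ w → par v = par w →
      ¬ EdgeCross s(v, par v) s(w, par w) := by
    intro v w hv hw hvw h hc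
    rw [edgeCross_mk, ← h] at hc
    exact hshare _ _ _ (hne v hv) hvw hc.swap_left.swap_right
  have hrange : Crossings (parentGraph r par) = Set.range F := by
    ext c
    constructor
    · rintro ⟨e₁, e₂, rfl, h1, h2, h12, hc⟩
      obtain ⟨v, hv, rfl⟩ := (mem_edgeSet_parentGraph hne).1 h1
      obtain ⟨w, hw, rfl⟩ := (mem_edgeSet_parentGraph hne).1 h2
      have hvw : v ≠ w := fun h => h12 (by rw [h])
      by_cases hv0 : (v : Pt) 0 < 0 <;> by_cases hw0 : (w : Pt) 0 < 0
      · exact absurd hc (hcommon v w hv hw hvw (by rw [hparneg hv0, hparneg hw0]))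
      · exact hmixed v w hv hw hv0 hw0 hc
      · rw [Sym2.eq_swap]
        exact hmixed w v hw hv hw0 hv0 (edgeCross_mk.2 (edgeCross_mk.1 hc).symm)
      · exact absurd hc (hcommon v w hv hw hvw (by rw [hparpos hv0, hparpos hw0]))
    · rintro ⟨⟨p, q⟩, rfl⟩
      refine ⟨_, _, rfl, (mem_edgeSet_parentGraph hne).2 ⟨_, hleftr p, rfl⟩,
        (mem_edgeSet_parentGraph hne).2 ⟨_, hrightr q, rfl⟩, fun h => ?_, ?_⟩
      · have e1 := eq_of_parentEdge_eq hpp (hleftr _) (hrightr _) h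
        have h3 := hleftneg p
        simp only at e1
        rw [e1] at h3
        exact absurd h3 (hrightpos q).not_gt
      · simp only
        rw [edgeCross_mk, hparneg (hleftneg p), hparpos (hrightpos q).not_gt]
        have := hP p p.2
        have := hQ q q.2
        exact (segCross_parabolaPt (a := -p) (b := -(1 / 10)) (c := 1 / 10) (d := q)
          (by linarith) (by norm_num) (by linarith)).swap_right
  rw [hrange, Nat.card_range_of_injective hFinj]
  simp

/-- For every `n ≥ 2` there is a bicolored set of `n` points in
general position, with at least one red and one blue point, such that some minimum
bichromatic spanning tree of it has exactly `⌊n²/4⌋ − n + 1` crossings. -/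
theorem exists_minBST_with_max_crossings (n : ℕ) (hn : 2 ≤ n) :
    ∃ (S : Finset Pt) (col : Pt → Bool) (T : SimpleGraph ↥S),
      S.card = n ∧ GenPos S ∧
      (∃ r ∈ S, col r = true) ∧ (∃ b ∈ S, col b = false) ∧
      IsMinBST col T ∧
      (Nat.card (Crossings T) : ℤ) = (n : ℤ) ^ 2 / 4 - n + 1 := by
  have hinf : (Set.Icc (1 / 2 : ℝ) (3 / 5)).Infinite := Set.Icc_infinite (by norm_num)
  obtain ⟨P, hP, hPc⟩ := hinf.exists_subset_card_eq (n / 2 - 1)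
  obtain ⟨Q, hQ, hQc⟩ := hinf.exists_subset_card_eq (n - n / 2 - 1)
  obtain ⟨S, col, T, hS, hgen, hr, hb, hT, hcr⟩ :=
    exists_minBST_card_crossings (fun x hx => hP hx) (fun x hx => hQ hx)
  refine ⟨S, col, T, by omega, hgen, hr, hb, hT, ?_⟩
  rw [hcr, hPc, hQc]
  rcases Nat.even_or_odd' n with ⟨k, rfl | rfl⟩
  · obtain ⟨k, rfl⟩ : ∃ m, k = m + 1 := ⟨k - 1, by omega⟩
    rw [show 2 * (k + 1) / 2 - 1 = k by omega, show 2 * (k + 1) - 2 * (k + 1) / 2 - 1 = k by omega,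
      show ((2 * (k + 1) : ℕ) : ℤ) ^ 2 = ((k : ℤ) + 1) ^ 2 * 4 by push_cast; ring,
      Int.mul_ediv_cancel _ (by norm_num)]
    push_cast
    ring
  · obtain ⟨k, rfl⟩ : ∃ m, k = m + 1 := ⟨k - 1, by omega⟩
    rw [show (2 * (k + 1) + 1) / 2 - 1 = k by omega,
      show 2 * (k + 1) + 1 - (2 * (k + 1) + 1) / 2 - 1 = k + 1 by omega,
      show ((2 * (k + 1) + 1 : ℕ) : ℤ) ^ 2 = 1 + (((k : ℤ) + 1) ^ 2 + (k + 1)) * 4 by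
        push_cast; ring,
      Int.add_mul_ediv_right _ _ (by norm_num)]
    push_cast
    ring
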